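/- arXiv:math/0502428 — 8 statements merged into one kernel-verified Lean document; each statement's English description precedes it below -/
import Mathlib

section
/- For all real numbers x, y, u with x > 0, 0 ≤ y < π/3, and 0 < u < 1, one has sinh(x)·cosh(u·x)·sin(y)·sin(u·y) + cosh(x)·sinh(u·x)·cos(y)·cos(u·y) − sinh(u·x)·cosh(u·x) > 0. -/
/-!
Since `sinh` is strictly convex on `[0, ∞)` and `sin` is concave on `[0, π]`, both vanishing at `0`,
we have `sinh (u * x) < u * sinh x` and `u * sin y ≤ sin (u * y)`: the factor `u` lost on the
trigonometric side is gained on the hyperbolic side. With `cosh (u * x) < cosh x` and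
`cos y ≤ cos (u * y)`, the first two terms together are at least a weighted average, with weights
`sin y ^ 2` and `cos y ^ 2`, of two numbers exceeding `sinh (u * x) * cosh (u * x)`.
-/

open Real Set

theorem strictConvexOn_sinh_Ici : StrictConvexOn ℝ (Ici 0) sinh := by
  refine StrictMonoOn.strictConvexOn_of_deriv (convex_Ici 0) continuous_sinh.continuousOn ?_
  rw [Real.deriv_sinh]
  exact cosh_strictMonoOn.mono interior_subset

theorem sinh_mul_lt_mul_sinh {u x : ℝ} (hu0 : 0 < u) (hu1 : u < 1) (hx : 0 < x) :
    sinh (u * x) < u * sinh x := by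
  simpa using strictConvexOn_sinh_Ici.2 hx.le self_mem_Ici hx.ne' hu0 (sub_pos.2 hu1)
    (add_sub_cancel u 1)

theorem cosh_mul_lt_cosh {u x : ℝ} (hu : |u| < 1) (hx : x ≠ 0) : cosh (u * x) < cosh x := by
  rw [cosh_lt_cosh, abs_mul]
  exact mul_lt_of_lt_one_left (abs_pos.2 hx) hu

theorem mul_sin_le_sin_mul {u y : ℝ} (hu0 : 0 ≤ u) (hu1 : u ≤ 1) (hy0 : 0 ≤ y) (hy : y ≤ π) :
    u * sin y ≤ sin (u * y) := by
  simpa using strictConcaveOn_sin_Icc.concaveOn.2 ⟨hy0, hy⟩ (left_mem_Icc.2 pi_nonneg) hu0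
    (sub_nonneg.2 hu1) (add_sub_cancel u 1)

theorem mul_sin_sq_le_sin_mul_sin_mul {u y : ℝ} (hu0 : 0 ≤ u) (hu1 : u ≤ 1) (hy : |y| ≤ π) :
    u * sin y ^ 2 ≤ sin y * sin (u * y) := by
  wlog hy0 : 0 ≤ y generalizing y
  · simpa using this (y := -y) (by rwa [abs_neg]) (by linarith)
  rw [abs_of_nonneg hy0] at hy
  calc u * sin y ^ 2 = sin y * (u * sin y) := by ring
    _ ≤ sin y * sin (u * y) :=
      mul_le_mul_of_nonneg_left (mul_sin_le_sin_mul hu0 hu1 hy0 hy)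
        (sin_nonneg_of_nonneg_of_le_pi hy0 hy)

theorem cos_le_cos_mul {u y : ℝ} (hu : |u| ≤ 1) (hy : |y| ≤ π) : cos y ≤ cos (u * y) := by
  rw [← cos_abs y, ← cos_abs (u * y), abs_mul]
  exact cos_le_cos_of_nonneg_of_le_pi (by positivity) hy
    (mul_le_of_le_one_left (abs_nonneg y) hu)

theorem lt_mul_sin_sq_add_mul_cos_sq {a b c : ℝ} (ha : c < a) (hb : c < b) (y : ℝ) :
    c < a * sin y ^ 2 + b * cos y ^ 2 := by
  simpa [mul_comm] using
    convex_Ioi c ha hb (sq_nonneg (sin y)) (sq_nonneg (cos y)) (sin_sq_add_cos_sq y)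

theorem phi_one_pos_general {x y u : ℝ} (hx : 0 < x) (hy : |y| ≤ π / 2)
    (hu0 : 0 < u) (hu1 : u < 1) :
    0 < sinh x * cosh (u * x) * sin y * sin (u * y) +
      cosh x * sinh (u * x) * cos y * cos (u * y) - sinh (u * x) * cosh (u * x) := by
  have hu : |u| < 1 := by rwa [abs_of_pos hu0]
  have hy_pi : |y| ≤ π := hy.trans (half_le_self pi_nonneg)
  have hsinh_mul : 0 < sinh (u * x) := sinh_pos_iff.2 (mul_pos hu0 hx)
  rw [sub_pos]
  calc sinh (u * x) * cosh (u * x)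
      < u * sinh x * cosh (u * x) * sin y ^ 2 + cosh x * sinh (u * x) * cos y ^ 2 := by
        apply lt_mul_sin_sq_add_mul_cos_sq
        · exact mul_lt_mul_of_pos_right (sinh_mul_lt_mul_sinh hu0 hu1 hx) (cosh_pos _)
        · rw [mul_comm]
          exact mul_lt_mul_of_pos_right (cosh_mul_lt_cosh hu hx.ne') hsinh_mul
    _ = sinh x * cosh (u * x) * (u * sin y ^ 2) +
          cosh x * sinh (u * x) * cos y * cos y := by ring
    _ ≤ sinh x * cosh (u * x) * (sin y * sin (u * y)) +
          cosh x * sinh (u * x) * cos y * cos (u * y) := by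
        have hsin_sq := mul_sin_sq_le_sin_mul_sin_mul hu0.le hu1.le hy_pi
        have hcos_le := cos_le_cos_mul hu.le hy_pi
        have : 0 < sinh x := sinh_pos_iff.2 hx
        have hcos : 0 ≤ cos y := cos_nonneg_of_mem_Icc (abs_le.1 hy)
        gcongr
    _ = sinh x * cosh (u * x) * sin y * sin (u * y) +
          cosh x * sinh (u * x) * cos y * cos (u * y) := by ring

theorem phi_one_pos (x y u : ℝ) (hx : 0 < x) (hy0 : 0 ≤ y) (hy : y < Real.pi / 3)
    (hu0 : 0 < u) (hu1 : u < 1) :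
    Real.sinh x * Real.cosh (u * x) * Real.sin y * Real.sin (u * y) +
      Real.cosh x * Real.sinh (u * x) * Real.cos y * Real.cos (u * y) -
      Real.sinh (u * x) * Real.cosh (u * x) > 0 :=
  phi_one_pos_general hx (abs_le.2 ⟨by linarith [pi_pos], by linarith [pi_pos]⟩) hu0 hu1
end

section
/- For all real numbers x, y, u with x ≥ 0, 0 < y < π/3, and 0 < u < 1, one has sin(u·y)·cos(u·y) + sinh(x)·sinh(u·x)·sin(y)·cos(u·y) − cosh(x)·cosh(u·x)·cos(y)·sin(u·y) > 0. -/
/-!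
The product-to-sum formulas turn the expression, with `v = u * x` and `w = u * y`, into
`sin w * (cos w - cos y)` plus half of
`(cosh (x + v) - 1) * sin (y - w) - (cosh (x - v) - 1) * sin (y + w)`. The first term is positive.
For the second, `x - v` and `y - w` are `x + v` and `y + w` scaled by the same factor
`r = (1 - u) / (1 + u)` in `[0, 1]`: convexity makes `cosh - 1` shrink at least by the factor `r`,
while concavity on `[0, π]` makes `sin` shrink at most by it. If `y + w > π`, the signs of the two
sines suffice.
-/

open Real

theorem convexOn_cosh : ConvexOn ℝ Set.univ cosh :=
  Monotone.convexOn_univ_of_deriv differentiable_cosh <| by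
    simpa only [Real.deriv_cosh] using sinh_strictMono.monotone

theorem cosh_mul_sub_one_le {r : ℝ} (hr0 : 0 ≤ r) (hr1 : r ≤ 1) (t : ℝ) :
    cosh (r * t) - 1 ≤ r * (cosh t - 1) := by
  have chord : cosh (r * t) ≤ r * cosh t + (1 - r) := by
    simpa using convexOn_cosh.2 (Set.mem_univ t) (Set.mem_univ 0) hr0 (sub_nonneg.2 hr1)
      (add_sub_cancel r 1)
  linarith

theorem mul_sin_le_sin_mul_s8 {r θ : ℝ} (hr0 : 0 ≤ r) (hr1 : r ≤ 1) (hθ0 : 0 ≤ θ) (hθ : θ ≤ π) :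
    r * sin θ ≤ sin (r * θ) := by
  simpa using strictConcaveOn_sin_Icc.concaveOn.2 ⟨hθ0, hθ⟩ ⟨le_rfl, pi_nonneg⟩ hr0
    (sub_nonneg.2 hr1) (add_sub_cancel r 1)

theorem cosh_mul_sub_one_mul_sin_le {r θ : ℝ} (hr0 : 0 ≤ r) (hr1 : r ≤ 1) (hθ0 : 0 ≤ θ)
    (hθ : θ ≤ 2 * π) (hrθ : r * θ ≤ π) (t : ℝ) :
    (cosh (r * t) - 1) * sin θ ≤ (cosh t - 1) * sin (r * θ) := by
  have cosh_sub_one_nonneg (s : ℝ) : 0 ≤ cosh s - 1 := sub_nonneg.2 (one_le_cosh s)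
  rcases le_total θ π with hθπ | hπθ
  · have hsin : 0 ≤ sin θ := sin_nonneg_of_nonneg_of_le_pi hθ0 hθπ
    calc (cosh (r * t) - 1) * sin θ
        ≤ r * (cosh t - 1) * sin θ :=
          mul_le_mul_of_nonneg_right (cosh_mul_sub_one_le hr0 hr1 t) hsin
      _ = (cosh t - 1) * (r * sin θ) := by ring
      _ ≤ (cosh t - 1) * sin (r * θ) :=
          mul_le_mul_of_nonneg_left (mul_sin_le_sin_mul_s8 hr0 hr1 hθ0 hθπ) (cosh_sub_one_nonneg t)
  · have hsin : sin θ ≤ 0 := by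
      rw [← sin_sub_two_pi]
      exact sin_nonpos_of_nonpos_of_neg_pi_le (by linarith) (by linarith)
    have hsin_mul : 0 ≤ sin (r * θ) := sin_nonneg_of_nonneg_of_le_pi (mul_nonneg hr0 hθ0) hrθ
    exact (mul_nonpos_of_nonneg_of_nonpos (cosh_sub_one_nonneg _) hsin).trans
      (mul_nonneg (cosh_sub_one_nonneg t) hsin_mul)

theorem sin_mul_cos_add_sinh_sub_cosh_eq (x v y w : ℝ) :
    sin w * cos w + sinh x * sinh v * sin y * cos w - cosh x * cosh v * cos y * sin w =
      sin w * (cos w - cos y) +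
        ((cosh (x + v) - 1) * sin (y - w) - (cosh (x - v) - 1) * sin (y + w)) / 2 := by
  rw [cosh_add, cosh_sub, sin_add, sin_sub]
  ring

theorem phi_two_pos_general (x : ℝ) {y u : ℝ} (hy0 : 0 < y) (hy : y ≤ π) (hu0 : 0 < u)
    (hu1 : u < 1) :
    0 < sin (u * y) * cos (u * y) + sinh x * sinh (u * x) * sin y * cos (u * y) -
      cosh x * cosh (u * x) * cos y * sin (u * y) := by
  have huy0 : 0 < u * y := mul_pos hu0 hy0
  have huy : u * y < y := mul_lt_of_lt_one_left hy0 hu1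
  have sin_mul_cos_sub_pos : 0 < sin (u * y) * (cos (u * y) - cos y) :=
    mul_pos (sin_pos_of_pos_of_lt_pi huy0 (huy.trans_le hy))
      (sub_pos.2 (cos_lt_cos_of_nonneg_of_le_pi huy0.le hy huy))
  obtain ⟨r, hr0, hr1, hr⟩ : ∃ r, 0 ≤ r ∧ r ≤ 1 ∧ ∀ z : ℝ, r * (z + u * z) = z - u * z := by
    refine ⟨(1 - u) / (1 + u), div_nonneg (by linarith) (by linarith),
      (div_le_one (by linarith)).2 (by linarith), fun z ↦ ?_⟩
    field_simp
  have key := cosh_mul_sub_one_mul_sin_le (θ := y + u * y) hr0 hr1 (by linarith) (by linarith)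
    (by rw [hr]; linarith) (x + u * x)
  rw [hr, hr] at key
  rw [sin_mul_cos_add_sinh_sub_cosh_eq]
  linarith

theorem phi_two_pos (x y u : ℝ) (hx : 0 ≤ x) (hy0 : 0 < y) (hy : y < Real.pi / 3)
    (hu0 : 0 < u) (hu1 : u < 1) :
    Real.sin (u * y) * Real.cos (u * y) +
      Real.sinh x * Real.sinh (u * x) * Real.sin y * Real.cos (u * y) -
      Real.cosh x * Real.cosh (u * x) * Real.cos y * Real.sin (u * y) > 0 :=
  phi_two_pos_general x hy0 (by linarith [pi_pos]) hu0 hu1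
end

section
/- For all real numbers y and u with 0 < y < π/3 and 0 < u < 1, one has u·sin(y)·cos(u·y) − sin(u·y)·cos(y) > 0. -/
/-!
As a function of `y`, the expression vanishes at `0`. In its derivative the terms in
`cos y * cos (u * y)` cancel, leaving `(1 - u ^ 2) * (sin y * sin (u * y))`, which is positive
on `(0, π)`.
-/

open Real Set

theorem hasDerivAt_mul_sin_mul_cos_sub (u x : ℝ) :
    HasDerivAt (fun x ↦ u * sin x * cos (u * x) - sin (u * x) * cos x)
      ((1 - u ^ 2) * (sin x * sin (u * x))) x := by
  have hmul : HasDerivAt (fun x ↦ u * x) u x := hasDerivAt_const_mul u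
  have hderiv := (((hasDerivAt_sin x).const_mul u).mul hmul.cos).sub
    (hmul.sin.mul (hasDerivAt_cos x))
  exact hderiv.congr_deriv (by ring)

theorem sin_mul_sin_mul_pos {u x : ℝ} (hu0 : 0 < u) (hu1 : u ≤ 1) (hx : x ∈ Ioo 0 π) :
    0 < sin x * sin (u * x) := by
  have hux : u * x ∈ Ioo 0 π :=
    ⟨mul_pos hu0 hx.1, (mul_le_of_le_one_left hx.1.le hu1).trans_lt hx.2⟩
  exact mul_pos (sin_pos_of_mem_Ioo hx) (sin_pos_of_mem_Ioo hux)

theorem strictMonoOn_mul_sin_mul_cos_sub {u : ℝ} (hu0 : 0 < u) (hu1 : u < 1) :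
    StrictMonoOn (fun x ↦ u * sin x * cos (u * x) - sin (u * x) * cos x) (Icc 0 π) := by
  refine strictMonoOn_of_hasDerivWithinAt_pos (convex_Icc 0 π) (by fun_prop)
    (fun x _ ↦ (hasDerivAt_mul_sin_mul_cos_sub u x).hasDerivWithinAt) fun x hx ↦ ?_
  rw [interior_Icc] at hx
  have hcoeff : 0 < 1 - u ^ 2 := sub_pos.2 (pow_lt_one₀ hu0.le hu1 two_ne_zero)
  exact mul_pos hcoeff (sin_mul_sin_mul_pos hu0 hu1.le hx)

theorem mul_sin_cos_pos_general {y u : ℝ} (hy0 : 0 < y) (hy : y ≤ π) (hu0 : 0 < u) (hu1 : u < 1) :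
    0 < u * sin y * cos (u * y) - sin (u * y) * cos y := by
  simpa using strictMonoOn_mul_sin_mul_cos_sub hu0 hu1
    (left_mem_Icc.2 pi_nonneg) ⟨hy0.le, hy⟩ hy0

theorem mul_sin_cos_pos (y u : ℝ) (hy0 : 0 < y) (hy : y < Real.pi / 3)
    (hu0 : 0 < u) (hu1 : u < 1) :
    u * Real.sin y * Real.cos (u * y) - Real.sin (u * y) * Real.cos y > 0 :=
  mul_sin_cos_pos_general hy0 (by linarith [pi_pos]) hu0 hu1
end

section
/- For all real numbers y and u with 0 < y < π/3 and 0 < u < 1, one has u·(cos(y)·cos(u·y) − 1) + sin(y)·sin(u·y) > 0. -/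
/-!
For fixed `u`, the function `f x = u cos x cos (u x) + sin x sin (u x)` takes the value `u` at `0`.
In its derivative the terms in `sin x cos (u x)` cancel, leaving `(1 - u²) cos x sin (u x)`, which
is positive on `(0, π / 2)` when `0 < u < 1`. Hence `f y > u` as long as `0 < y ≤ π / 2`.
-/

theorem hasDerivAt_mul_cos_mul_cos_add_sin_mul_sin (u x : ℝ) :
    HasDerivAt (fun x ↦ u * (Real.cos x * Real.cos (u * x)) + Real.sin x * Real.sin (u * x))
      ((1 - u ^ 2) * (Real.cos x * Real.sin (u * x))) x := by
  have h_lin : HasDerivAt (fun x ↦ u * x) u x := hasDerivAt_const_mul u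
  have h_cos := ((Real.hasDerivAt_cos x).mul h_lin.cos).const_mul u
  have h_sin := (Real.hasDerivAt_sin x).mul h_lin.sin
  exact (h_cos.add h_sin).congr_deriv (by ring)

theorem strictMonoOn_mul_cos_mul_cos_add_sin_mul_sin {u : ℝ} (hu0 : 0 < u) (hu1 : u < 1) :
    StrictMonoOn
      (fun x ↦ u * (Real.cos x * Real.cos (u * x)) + Real.sin x * Real.sin (u * x))
      (Set.Icc 0 (Real.pi / 2)) := by
  have h_deriv := hasDerivAt_mul_cos_mul_cos_add_sin_mul_sin u
  refine strictMonoOn_of_deriv_pos (convex_Icc _ _)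
    (fun x _ ↦ (h_deriv x).continuousAt.continuousWithinAt) fun x hx ↦ ?_
  rw [interior_Icc] at hx
  obtain ⟨hx0, hx_lt⟩ := hx
  rw [(h_deriv x).deriv]
  have h_factor : 0 < 1 - u ^ 2 := sub_pos.2 (pow_lt_one₀ hu0.le hu1 two_ne_zero)
  have h_cos : 0 < Real.cos x := Real.cos_pos_of_mem_Ioo ⟨by linarith, hx_lt⟩
  have h_sin : 0 < Real.sin (u * x) := by
    have hux : u * x < x := mul_lt_of_lt_one_left hx0 hu1
    exact Real.sin_pos_of_pos_of_lt_pi (mul_pos hu0 hx0) (by linarith)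
  positivity

theorem cos_cos_sin_sin_pos_general {y u : ℝ} (hy0 : 0 < y) (hy : y ≤ Real.pi / 2)
    (hu0 : 0 < u) (hu1 : u < 1) :
    0 < u * (Real.cos y * Real.cos (u * y) - 1) + Real.sin y * Real.sin (u * y) := by
  have h_lt : u < u * (Real.cos y * Real.cos (u * y)) + Real.sin y * Real.sin (u * y) := by
    simpa using strictMonoOn_mul_cos_mul_cos_add_sin_mul_sin hu0 hu1
      (Set.left_mem_Icc.2 (hy0.le.trans hy)) ⟨hy0.le, hy⟩ hy0
  linarith

theorem cos_cos_sin_sin_pos (y u : ℝ) (hy0 : 0 < y) (hy : y < Real.pi / 3)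
    (hu0 : 0 < u) (hu1 : u < 1) :
    u * (Real.cos y * Real.cos (u * y) - 1) + Real.sin y * Real.sin (u * y) > 0 :=
  cos_cos_sin_sin_pos_general hy0 (by linarith) hu0 hu1
end

section
/- For every nonzero complex number a with |Im(a)| < π, the real part of a·sinh(a)/(cosh(a) − 1) is positive. -/
/-!
Put `u = a / 2`. The identities `sinh (u + v) - sinh (u - v) = 2 cosh u sinh v` and
`cosh (u + v) - cosh (u - v) = 2 sinh u sinh v` have the quotient `cosh u / sinh u` for every `v`
with `sinh v ≠ 0`. Taking `v = u` gives `sinh a / (cosh a - 1)`, and taking `v = conj u` gives a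
quotient with real denominator. For `a = x + iy`, the real part in question is therefore
`(x sinh x + y sin y) / (cosh x - cos y)`. When `|y| < π`, each of the terms `x sinh x`, `y sin y`,
`cosh x - 1` and `1 - cos y` is nonnegative and vanishes only at `0`.
-/

open ComplexConjugate

section RealInequalities

variable {x y : ℝ}

theorem mul_sinh_nonneg (x : ℝ) : 0 ≤ x * Real.sinh x := by
  rcases le_total 0 x with hx | hx
  · exact mul_nonneg hx (Real.sinh_nonneg_iff.mpr hx)
  · exact mul_nonneg_of_nonpos_of_nonpos hx (Real.sinh_nonpos_iff.mpr hx)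

theorem mul_sinh_pos (hx : x ≠ 0) : 0 < x * Real.sinh x :=
  (mul_sinh_nonneg x).lt_of_ne' (mul_ne_zero hx (Real.sinh_ne_zero.mpr hx))

theorem mul_sin_nonneg (hy : |y| ≤ Real.pi) : 0 ≤ y * Real.sin y := by
  rcases le_total 0 y with hy₀ | hy₀
  · exact mul_nonneg hy₀ (Real.sin_nonneg_of_nonneg_of_le_pi hy₀ (abs_le.mp hy).2)
  · exact mul_nonneg_of_nonpos_of_nonpos hy₀
      (Real.sin_nonpos_of_nonpos_of_neg_pi_le hy₀ (abs_le.mp hy).1)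

theorem mul_sin_pos (hy₀ : y ≠ 0) (hy : |y| < Real.pi) : 0 < y * Real.sin y :=
  (mul_sin_nonneg hy.le).lt_of_ne' <| mul_ne_zero hy₀ <|
    (Real.sin_eq_zero_iff_of_lt_of_lt (abs_lt.mp hy).1 (abs_lt.mp hy).2).not.mpr hy₀

theorem mul_sinh_add_mul_sin_pos (hxy : x ≠ 0 ∨ y ≠ 0) (hy : |y| < Real.pi) :
    0 < x * Real.sinh x + y * Real.sin y := by
  rcases hxy with hx | hy₀
  · exact add_pos_of_pos_of_nonneg (mul_sinh_pos hx) (mul_sin_nonneg hy.le)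
  · exact add_pos_of_nonneg_of_pos (mul_sinh_nonneg x) (mul_sin_pos hy₀ hy)

theorem cos_lt_cosh (hxy : x ≠ 0 ∨ y ≠ 0) (hy : |y| < 2 * Real.pi) : Real.cos y < Real.cosh x := by
  rcases hxy with hx | hy₀
  · exact (Real.cos_le_one y).trans_lt (Real.one_lt_cosh.mpr hx)
  · have cos_ne_one : Real.cos y ≠ 1 :=
      (Real.cos_eq_one_iff_of_lt_of_lt (abs_lt.mp hy).1 (abs_lt.mp hy).2).not.mpr hy₀
    exact ((Real.cos_le_one y).lt_of_ne cos_ne_one).trans_le (Real.one_le_cosh x)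

end RealInequalities

theorem sinh_add_sub_sinh_sub (u v : ℂ) :
    Complex.sinh (u + v) - Complex.sinh (u - v) = 2 * Complex.cosh u * Complex.sinh v := by
  rw [Complex.sinh_add, Complex.sinh_sub]
  ring

theorem cosh_add_sub_cosh_sub (u v : ℂ) :
    Complex.cosh (u + v) - Complex.cosh (u - v) = 2 * Complex.sinh u * Complex.sinh v := by
  rw [Complex.cosh_add, Complex.cosh_sub]
  ring

theorem half_add_conj_half (z : ℂ) : z / 2 + conj (z / 2) = z.re := by
  rw [Complex.add_conj, Complex.div_ofNat_re]
  push_cast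
  ring

theorem half_sub_conj_half (z : ℂ) : z / 2 - conj (z / 2) = z.im * Complex.I := by
  rw [Complex.sub_conj, Complex.div_ofNat_im]
  push_cast
  ring

theorem sinh_re_sub_sin_im_mul_I (z : ℂ) :
    Complex.sinh z.re - Complex.sin z.im * Complex.I =
      2 * Complex.cosh (z / 2) * conj (Complex.sinh (z / 2)) := by
  rw [← half_add_conj_half, ← Complex.sinh_mul_I, ← half_sub_conj_half, sinh_add_sub_sinh_sub,
    Complex.sinh_conj]

theorem cosh_re_sub_cos_im (z : ℂ) :
    Complex.cosh z.re - Complex.cos z.im =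
      2 * Complex.sinh (z / 2) * conj (Complex.sinh (z / 2)) := by
  rw [← half_add_conj_half, ← Complex.cosh_mul_I, ← half_sub_conj_half, cosh_add_sub_cosh_sub,
    Complex.sinh_conj]

-- When `cosh z = 1`, both denominators are `0` and both sides are the junk value `0`.
theorem sinh_div_cosh_sub_one (z : ℂ) :
    Complex.sinh z / (Complex.cosh z - 1) =
      (Real.sinh z.re - Real.sin z.im * Complex.I) /
        ((Real.cosh z.re - Real.cos z.im : ℝ) : ℂ) := by
  have sinh_eq : Complex.sinh z = 2 * Complex.cosh (z / 2) * Complex.sinh (z / 2) := by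
    simpa using sinh_add_sub_sinh_sub (z / 2) (z / 2)
  have cosh_sub_one_eq :
      Complex.cosh z - 1 = 2 * Complex.sinh (z / 2) * Complex.sinh (z / 2) := by
    simpa using cosh_add_sub_cosh_sub (z / 2) (z / 2)
  push_cast
  rw [sinh_eq, cosh_sub_one_eq, sinh_re_sub_sin_im_mul_I, cosh_re_sub_cos_im]
  by_cases h : Complex.sinh (z / 2) = 0
  · simp only [h, mul_zero, map_zero, div_zero]
  · rw [mul_div_mul_right _ _ h, mul_div_mul_right _ _ ((map_ne_zero _).mpr h)]

theorem re_mul_sinh_div_cosh_sub_one (z : ℂ) :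
    (z * Complex.sinh z / (Complex.cosh z - 1)).re =
      (z.re * Real.sinh z.re + z.im * Real.sin z.im) / (Real.cosh z.re - Real.cos z.im) := by
  rw [mul_div_assoc, sinh_div_cosh_sub_one, ← mul_div_assoc, Complex.div_ofReal_re]
  simp only [Complex.mul_re, Complex.sub_re, Complex.sub_im, Complex.ofReal_re, Complex.ofReal_im,
    Complex.mul_im, Complex.I_re, Complex.I_im]
  ring

theorem re_mul_sinh_div_cosh_sub_one_pos (a : ℂ) (ha : a ≠ 0)
    (h : |a.im| < Real.pi) :
    0 < (a * Complex.sinh a / (Complex.cosh a - 1)).re := by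
  have re_or_im_ne_zero : a.re ≠ 0 ∨ a.im ≠ 0 := not_and_or.mp (Complex.ext_iff.not.mp ha)
  have im_lt_two_pi : |a.im| < 2 * Real.pi := h.trans (lt_two_mul_self Real.pi_pos)
  rw [re_mul_sinh_div_cosh_sub_one]
  exact div_pos (mul_sinh_add_mul_sin_pos re_or_im_ne_zero h)
    (sub_pos.mpr (cos_lt_cosh re_or_im_ne_zero im_lt_two_pi))
end

section
/- For all real numbers x and y with (x, y) ≠ (0, 0) and |y| < π/3, one has (x² − y²)·(cos(y)² + sinh(x)² − cos(y)·cosh(x)) + 2·x·y·sin(y)·sinh(x) > 0. -/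
/-!
Write the middle factor as `Q = sinh² x - cos y * (cosh x - cos y)`.

If `|y| ≤ |x|`, then `Q > 0`, because `cosh x + cos y ≥ 2` and `Q` is this excess plus a positive
definite quadratic form in `cosh x - 1` and `1 - cos y`; the remaining term is at least `x² * y²`.

If `|x| < |y| < π / 2`, then `Q < sinh² x`, and `(y² - x²) * sinh² x` is dominated by the remaining
term: `(4 - x²) * sinh x ≤ 4 * x` for `x ≥ 0` (from `tanh (x / 2) ≤ x / 2`), while Jordan's
inequality gives `y² ≤ 2 * y * sin y`.
-/

open Real

theorem sq_le_mul_sinh (x : ℝ) : x ^ 2 ≤ x * sinh x := by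
  rw [sq]
  rcases le_total 0 x with hx | hx
  · exact mul_le_mul_of_nonneg_left (self_le_sinh_iff.2 hx) hx
  · exact mul_le_mul_of_nonpos_left (sinh_le_self_iff.2 hx) hx

theorem one_add_sq_div_two_le_cosh (x : ℝ) : 1 + x ^ 2 / 2 ≤ cosh x := by
  have half_angle : cosh x = 1 + 2 * sinh (x / 2) ^ 2 := by
    calc cosh x = cosh (2 * (x / 2)) := by ring_nf
      _ = 1 + 2 * sinh (x / 2) ^ 2 := by rw [cosh_two_mul, cosh_sq]; ring
  have sq_le : (x / 2) ^ 2 ≤ sinh (x / 2) ^ 2 := by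
    rw [sq_le_sq, abs_sinh]
    exact self_le_sinh_iff.2 (abs_nonneg _)
  linarith

theorem sinh_le_mul_cosh {x : ℝ} (hx : 0 ≤ x) : sinh x ≤ x * cosh x := by
  have deriv_gap (t : ℝ) : HasDerivAt (fun t ↦ t * cosh t - sinh t) (t * sinh t) t := by
    simpa using ((hasDerivAt_id t).fun_mul (hasDerivAt_cosh t)).fun_sub (hasDerivAt_sinh t)
  have mono : Monotone fun t ↦ t * cosh t - sinh t :=
    monotone_of_hasDerivAt_nonneg deriv_gap fun t ↦ (sq_nonneg t).trans (sq_le_mul_sinh t)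
  simpa using mono hx

theorem four_sub_sq_mul_sinh_le {x : ℝ} (hx : 0 ≤ x) : (4 - x ^ 2) * sinh x ≤ 4 * x := by
  obtain ⟨t, rfl⟩ : ∃ t, x = 2 * t := ⟨x / 2, by ring⟩
  have ht : 0 ≤ t := by linarith
  have sinh_le : sinh t ≤ t * cosh t := sinh_le_mul_cosh ht
  have cosh_sq_le : (1 - t ^ 2) * cosh t ^ 2 ≤ 1 := by
    have : sinh t ^ 2 ≤ (t * cosh t) ^ 2 := pow_le_pow_left₀ (sinh_nonneg_iff.2 ht) sinh_le 2
    linarith [cosh_sq t]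
  rcases le_total (t ^ 2) 1 with h | h
  · calc (4 - (2 * t) ^ 2) * sinh (2 * t)
        = 8 * ((1 - t ^ 2) * cosh t * sinh t) := by rw [sinh_two_mul]; ring
      _ ≤ 8 * ((1 - t ^ 2) * cosh t * (t * cosh t)) := by
        have := mul_nonneg (sub_nonneg.2 h) (cosh_pos t).le
        gcongr
      _ = 8 * t * ((1 - t ^ 2) * cosh t ^ 2) := by ring
      _ ≤ 8 * t * 1 := by gcongr
      _ = 4 * (2 * t) := by ring
  · have : (4 - (2 * t) ^ 2) * sinh (2 * t) ≤ 0 :=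
      mul_nonpos_of_nonpos_of_nonneg (by linarith) (sinh_nonneg_iff.2 hx)
    linarith

theorem four_sub_sq_mul_sinh_sq_le (x : ℝ) : (4 - x ^ 2) * sinh x ^ 2 ≤ 4 * (x * sinh x) := by
  wlog hx : 0 ≤ x generalizing x
  · simpa using this (-x) (by linarith)
  linarith [mul_le_mul_of_nonneg_right (four_sub_sq_mul_sinh_le hx) (sinh_nonneg_iff.2 hx)]

theorem sq_le_two_mul_mul_sin {y : ℝ} (hy : |y| ≤ π / 2) : y ^ 2 ≤ 2 * (y * sin y) := by
  wlog hy₀ : 0 ≤ y generalizing y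
  · simpa using this (y := -y) (by rwa [abs_neg]) (by linarith)
  have jordan : 2 / π * y ≤ sin y := mul_le_sin hy₀ ((le_abs_self y).trans hy)
  have half_le : 1 / 2 ≤ 2 / π := by
    rw [div_le_div_iff₀ two_pos pi_pos]
    linarith [pi_le_four]
  have : 1 / 2 * y ≤ sin y := (mul_le_mul_of_nonneg_right half_le hy₀).trans jordan
  linarith [mul_le_mul_of_nonneg_left this hy₀]

theorem sq_sub_sq_mul_sinh_sq_le (x : ℝ) {y : ℝ} (hy : |y| ≤ π / 2) :
    (y ^ 2 - x ^ 2) * sinh x ^ 2 ≤ 2 * (x * sinh x) * (y * sin y) := by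
  have y_sq_le : y ^ 2 ≤ 4 := by
    have : |y| ≤ 2 := by linarith [pi_le_four]
    linarith [sq_le_sq' (abs_le.1 this).1 (abs_le.1 this).2]
  have x_sinh_nonneg : 0 ≤ x * sinh x := (sq_nonneg x).trans (sq_le_mul_sinh x)
  calc (y ^ 2 - x ^ 2) * sinh x ^ 2
      ≤ (y ^ 2 - y ^ 2 / 4 * x ^ 2) * sinh x ^ 2 := by
        have : y ^ 2 / 4 * x ^ 2 ≤ x ^ 2 := mul_le_of_le_one_left (sq_nonneg x) (by linarith)
        gcongr
    _ = y ^ 2 / 4 * ((4 - x ^ 2) * sinh x ^ 2) := by ring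
    _ ≤ y ^ 2 / 4 * (4 * (x * sinh x)) := by
        gcongr ?_ * ?_
        exact four_sub_sq_mul_sinh_sq_le x
    _ = x * sinh x * y ^ 2 := by ring
    _ ≤ x * sinh x * (2 * (y * sin y)) := by
        gcongr
        exact sq_le_two_mul_mul_sin hy
    _ = 2 * (x * sinh x) * (y * sin y) := by ring

theorem cos_sq_add_sinh_sq_sub_pos {x y : ℝ} (hx : x ≠ 0) (hyx : |y| ≤ |x|) :
    0 < cos y ^ 2 + sinh x ^ 2 - cos y * cosh x := by
  have two_le : 2 ≤ cosh x + cos y := by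
    linarith [one_add_sq_div_two_le_cosh x, one_sub_sq_div_two_le_cos (x := y), sq_le_sq.2 hyx]
  have hu : 0 < cosh x - 1 := sub_pos.2 (one_lt_cosh.2 hx)
  have hv : 0 ≤ 1 - cos y := sub_nonneg.2 (cos_le_one y)
  calc 0 < (cosh x + cos y - 2)
        + ((cosh x - 1) ^ 2 + (cosh x - 1) * (1 - cos y) + (1 - cos y) ^ 2) :=
        add_pos_of_nonneg_of_pos (sub_nonneg.2 two_le) (by positivity)
    _ = cos y ^ 2 + sinh x ^ 2 - cos y * cosh x := by rw [sinh_sq]; ring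

theorem f_xy_pos_of_abs_le {x y : ℝ} (hx : x ≠ 0) (hyx : |y| ≤ |x|) (hy : |y| ≤ π / 2) :
    0 < (x ^ 2 - y ^ 2) * (cos y ^ 2 + sinh x ^ 2 - cos y * cosh x)
      + 2 * x * y * sin y * sinh x := by
  have factor_pos := cos_sq_add_sinh_sq_sub_pos hx hyx
  have x_sq_pos : 0 < x ^ 2 := by positivity
  have le_last : x ^ 2 * y ^ 2 ≤ 2 * x * y * sin y * sinh x := by
    linarith [mul_le_mul (sq_le_mul_sinh x) (sq_le_two_mul_mul_sin hy) (sq_nonneg y)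
      (x_sq_pos.le.trans (sq_le_mul_sinh x))]
  rcases eq_or_ne y 0 with rfl | hy₀
  · simpa using mul_pos x_sq_pos factor_pos
  · have : 0 < x ^ 2 * y ^ 2 := by positivity
    linarith [mul_nonneg (sub_nonneg.2 (sq_le_sq.2 hyx)) factor_pos.le]

theorem f_xy_pos_of_abs_lt {x y : ℝ} (hxy : |x| < |y|) (hy : |y| < π / 2) :
    0 < (x ^ 2 - y ^ 2) * (cos y ^ 2 + sinh x ^ 2 - cos y * cosh x)
      + 2 * x * y * sin y * sinh x := by
  have cos_pos : 0 < cos y := cos_pos_of_mem_Ioo (abs_lt.1 hy)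
  have cos_lt_cosh : cos y < cosh x := by
    have hy₀ : y ≠ 0 := abs_pos.1 ((abs_nonneg x).trans_lt hxy)
    have : cos y < 1 := by
      rw [← cos_abs, ← cos_zero]
      exact cos_lt_cos_of_nonneg_of_le_pi_div_two le_rfl hy.le (abs_pos.2 hy₀)
    exact this.trans_le (one_le_cosh x)
  have gain_pos : 0 < (y ^ 2 - x ^ 2) * (cos y * (cosh x - cos y)) :=
    mul_pos (sub_pos.2 (sq_lt_sq.2 hxy)) (mul_pos cos_pos (sub_pos.2 cos_lt_cosh))
  linarith [sq_sub_sq_mul_sinh_sq_le x hy.le]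

theorem f_xy_pos_general (x y : ℝ) (hxy : (x, y) ≠ (0, 0)) (hy : |y| < π / 2) :
    (x ^ 2 - y ^ 2) * (cos y ^ 2 + sinh x ^ 2 - cos y * cosh x)
      + 2 * x * y * sin y * sinh x > 0 := by
  rcases lt_or_ge |x| |y| with h | h
  · exact f_xy_pos_of_abs_lt h hy
  · have hx : x ≠ 0 := by
      rintro rfl
      exact hxy (by simpa using h)
    exact f_xy_pos_of_abs_le hx h hy.le

theorem f_xy_pos (x y : ℝ) (hxy : (x, y) ≠ (0, 0)) (hy : |y| < Real.pi / 3) :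
    (x ^ 2 - y ^ 2) *
        (Real.cos y ^ 2 + Real.sinh x ^ 2 - Real.cos y * Real.cosh x) +
      2 * x * y * Real.sin y * Real.sinh x > 0 :=
  f_xy_pos_general x y hxy (by linarith [pi_pos])
end

section
/- For every real number x with 0 < x < π, one has cosh(x)·cos(x) < 1. -/
/-!
The derivative of `cosh x * cos x` is `sinh x * cos x - cosh x * sin x`. It vanishes at `0`, and its
own derivative `-2 * (sinh x * sin x)` is negative on `(0, π)`. Hence `cosh * cos` strictly
decreases on `[0, π]` from its value `1` at `0`. The product is even, and it is nonpositive on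
`[π, 3π/2]`, where the cosine is.
-/

section

open Real Set

theorem hasDerivAt_cosh_mul_cos (x : ℝ) :
    HasDerivAt (fun y => cosh y * cos y) (sinh x * cos x - cosh x * sin x) x :=
  ((hasDerivAt_cosh x).mul (hasDerivAt_cos x)).congr_deriv (by ring)

theorem hasDerivAt_sinh_mul_cos_sub_cosh_mul_sin (x : ℝ) :
    HasDerivAt (fun y => sinh y * cos y - cosh y * sin y) (-2 * (sinh x * sin x)) x :=
  (((hasDerivAt_sinh x).mul (hasDerivAt_cos x)).sub
    ((hasDerivAt_cosh x).mul (hasDerivAt_sin x))).congr_deriv (by ring)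

theorem strictAntiOn_sinh_mul_cos_sub_cosh_mul_sin :
    StrictAntiOn (fun x => sinh x * cos x - cosh x * sin x) (Icc 0 π) := by
  refine strictAntiOn_of_deriv_neg (convex_Icc 0 π) (by fun_prop) fun x hx => ?_
  rw [interior_Icc] at hx
  rw [(hasDerivAt_sinh_mul_cos_sub_cosh_mul_sin x).deriv]
  have sinh_mul_sin_pos : 0 < sinh x * sin x :=
    mul_pos (sinh_pos_iff.mpr hx.1) (sin_pos_of_mem_Ioo hx)
  linarith

theorem sinh_mul_cos_lt_cosh_mul_sin {x : ℝ} (hx0 : 0 < x) (hx : x ≤ π) :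
    sinh x * cos x < cosh x * sin x := by
  simpa using strictAntiOn_sinh_mul_cos_sub_cosh_mul_sin
    (left_mem_Icc.mpr pi_nonneg) ⟨hx0.le, hx⟩ hx0

theorem strictAntiOn_cosh_mul_cos : StrictAntiOn (fun x => cosh x * cos x) (Icc 0 π) := by
  refine strictAntiOn_of_deriv_neg (convex_Icc 0 π) (by fun_prop) fun x hx => ?_
  rw [interior_Icc] at hx
  rw [(hasDerivAt_cosh_mul_cos x).deriv]
  exact sub_neg.mpr (sinh_mul_cos_lt_cosh_mul_sin hx.1 hx.2.le)

theorem cosh_mul_cos_lt_one_general {x : ℝ} (hx0 : x ≠ 0) (hx : |x| ≤ π + π / 2) :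
    cosh x * cos x < 1 := by
  rw [← cosh_abs, ← cos_abs]
  have abs_x_pos : 0 < |x| := abs_pos.mpr hx0
  rcases le_total |x| π with abs_le_pi | pi_le_abs
  · simpa using strictAntiOn_cosh_mul_cos
      (left_mem_Icc.mpr pi_nonneg) ⟨abs_x_pos.le, abs_le_pi⟩ abs_x_pos
  · have cos_nonpos : cos |x| ≤ 0 :=
      cos_nonpos_of_pi_div_two_le_of_le (by linarith [pi_pos]) hx
    exact (mul_nonpos_of_nonneg_of_nonpos (cosh_pos |x|).le cos_nonpos).trans_lt one_pos

end

theorem cosh_mul_cos_lt_one (x : ℝ) (hx0 : 0 < x) (hx : x < Real.pi) :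
    Real.cosh x * Real.cos x < 1 :=
  cosh_mul_cos_lt_one_general hx0.ne' (by rw [abs_of_pos hx0]; linarith)
end

section
/- For every real number y with 0 < y < π/3, one has −2·y² + 2·(cos(y)² − cos(y)) + 4·y·sin(y) > 0. -/
/-!
Completing the square and using `sin² + cos² = 1`, the expression equals
`2 * ((1 - cos y) - (y - sin y)²)`. Near zero `y - sin y` is cubic and `1 - cos y` quadratic;
the Taylor bound `|y - sin y| ≤ |y|³ / 6` and the chord bound `2 y² / π² ≤ 1 - cos y` make this
comparison effective on all of `[-π/2, π/2]`.
-/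

theorem sub_sin_sq_lt_one_sub_cos {x : ℝ} (hx₀ : x ≠ 0) (hx : |x| ≤ Real.pi / 2) :
    (x - Real.sin x) ^ 2 < 1 - Real.cos x := by
  have pi_sq_lt : Real.pi ^ 2 < 10 := by nlinarith [Real.pi_pos, Real.pi_lt_d2]
  have sq_le : x ^ 2 ≤ (Real.pi / 2) ^ 2 := sq_le_sq.mpr (hx.trans (le_abs_self _))
  have pow_four_lt : x ^ 4 / 36 < 2 / Real.pi ^ 2 := by
    calc x ^ 4 / 36 = (x ^ 2) ^ 2 / 36 := by ring
      _ ≤ (5 / 2) ^ 2 / 36 := by gcongr; linarith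
      _ < 2 / 10 := by norm_num
      _ < 2 / Real.pi ^ 2 := by gcongr
  calc (x - Real.sin x) ^ 2 = |x - Real.sin x| ^ 2 := (sq_abs _).symm
    _ ≤ (|x| ^ 3 / 6) ^ 2 := by gcongr; exact Real.abs_sub_sin_le x
    _ = (|x| ^ 2) ^ 3 / 36 := by ring
    _ = x ^ 4 / 36 * x ^ 2 := by rw [sq_abs]; ring
    _ < 2 / Real.pi ^ 2 * x ^ 2 := by gcongr
    _ ≤ 1 - Real.cos x := by
      have abs_le_pi : |x| ≤ Real.pi := hx.trans (half_le_self Real.pi_pos.le)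
      linarith [Real.cos_le_one_sub_mul_cos_sq abs_le_pi]

theorem g_y_pos_general {y : ℝ} (hy₀ : y ≠ 0) (hy : |y| ≤ Real.pi / 2) :
    -2 * y ^ 2 + 2 * (Real.cos y ^ 2 - Real.cos y) + 4 * y * Real.sin y > 0 := by
  have complete_square :
      -2 * y ^ 2 + 2 * (Real.cos y ^ 2 - Real.cos y) + 4 * y * Real.sin y =
        2 * ((1 - Real.cos y) - (y - Real.sin y) ^ 2) := by
    rw [Real.cos_sq']
    ring
  rw [complete_square]
  exact mul_pos two_pos (sub_pos.mpr (sub_sin_sq_lt_one_sub_cos hy₀ hy))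

theorem g_y_pos (y : ℝ) (hy0 : 0 < y) (hy : y < Real.pi / 3) :
    -2 * y ^ 2 + 2 * (Real.cos y ^ 2 - Real.cos y) + 4 * y * Real.sin y > 0 :=
  g_y_pos_general hy0.ne' (by rw [abs_of_pos hy0]; linarith)
end
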